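/- Let W denote the set of finite words over the alphabet {0,1}, and for an integer k ≥ 1 let A_k be the finite graph whose vertex set is {(u,v) ∈ W × W : k−1 ≤ |u|+|v| ≤ k} (|w| denoting the length of the word w), with an edge between (u,v) and (u',v') whenever either v = v' and u' is obtained from u by appending one letter, or u = u' and v' is obtained from v by appending one letter. Then there exists a universal constant c > 0 such that for every k ≥ 1 and every function f : V(A_k) → ℝ with Σ_{v ∈ V(A_k)} f(v) = 0, one has Σ_{{a,b} ∈ E(A_k)} |f(a) − f(b)| ≥ (c/(k+2)) · Σ_{v ∈ V(A_k)} |f(v)|, where the first sum is over the edges of A_k. -/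

import Mathlib

open Set

/-- The vertex set of the annulus `A_k` of radii `{k−1, k}` in the product of two rooted
infinite binary trees: pairs of binary words whose lengths sum to `k−1` or `k`. -/
def AnnV (k : ℕ) : Type :=
  {p : List Bool × List Bool // k - 1 ≤ p.1.length + p.2.length ∧ p.1.length + p.2.length ≤ k}

/-- One-step relation in the product of two rooted binary trees: append one letter to one
of the two coordinates. -/
def AnnRel (a b : List Bool × List Bool) : Prop :=
  (a.2 = b.2 ∧ ∃ x : Bool, b.1 = a.1 ++ [x]) ∨ (a.1 = b.1 ∧ ∃ x : Bool, b.2 = a.2 ++ [x])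

/-- The annulus graph `A_k`. -/
def annGraph (k : ℕ) : SimpleGraph (AnnV k) :=
  SimpleGraph.fromRel (fun a b => AnnRel a.1 b.1)

/-- The value `|f(a) − f(b)|` on the edge `{a, b}`. -/
noncomputable def edgeVal {k : ℕ} (f : AnnV k → ℝ) : Sym2 (AnnV k) → ℝ :=
  Sym2.lift ⟨fun a b => |f a - f b|, fun a b => abs_sub_comm (f a) (f b)⟩

/-!
Cut the annulus of radii `n` and `n + 1` into blocks of pairs of words of lengths `(i, j)`. The
upper blocks `(i + 1, j)` and `(i, j + 1)` are joined through the lower block `(i, j)`, so the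
`L¹`-distances of `F` to a constant on these two blocks differ by at most the variation of `F` on
the edges above `(i, j)`. The same holds after averaging `F` over the first word. On the block
`(n + 1, 0)` this average is a single number `a`, and on `(0, n + 1)` averaging changes nothing;
passing along the averaged blocks from `(n + 1, 0)` to `(0, n + 1)`, then back along the blocks
themselves, shows that every upper block is within twice the total variation of `a`. There are
`n + 2` upper blocks, whence the linear loss in the radius, and the lower sphere is controlled by
the upper one.
-/

namespace TreeProduct

open Finset (HasAntidiagonal)

section Words

variable {α M : Type*} [AddCommMonoid M]

/-- The words of length `n` over the alphabet `α`, i.e. the `n`-th level of the rooted tree in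
which every vertex has one child for each letter of `α`. -/
noncomputable def words (α : Type*) [Finite α] (n : ℕ) : Finset (List α) :=
  (List.finite_length_eq α n).toFinset

@[simp]
lemma mem_words [Finite α] {n : ℕ} {w : List α} : w ∈ words α n ↔ w.length = n := by
  simp [words]

lemma words_zero [Finite α] : words α 0 = {[]} := by
  ext w
  simp

lemma sum_words_succ [Fintype α] (n : ℕ) (g : List α → M) :
    ∑ w ∈ words α (n + 1), g w = ∑ w ∈ words α n, ∑ x, g (w ++ [x]) := by
  rw [← Finset.sum_product']
  refine (Finset.sum_nbij (fun p : List α × α => p.1 ++ [p.2]) ?_ ?_ ?_ fun _ _ => rfl).symm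
  · simp +contextual
  · rintro ⟨u, x⟩ - ⟨v, y⟩ - h
    simpa using h
  · intro w hw
    obtain rfl | ⟨u, x, rfl⟩ := List.eq_nil_or_concat' w
    · simp at hw
    · exact ⟨(u, x), by simpa using hw, rfl⟩

lemma pairwiseDisjoint_words_product_words [Finite α] {s : Set (ℕ × ℕ)} :
    s.PairwiseDisjoint fun ij => words α ij.1 ×ˢ words α ij.2 := by
  intro ij _ kl _ hne
  refine Finset.disjoint_left.2 fun p hp hq => hne ?_
  simp only [Finset.mem_product, mem_words] at hp hq
  exact Prod.ext (hp.1.symm.trans hq.1) (hp.2.symm.trans hq.2)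

/-- The vertices at distance `n` from the root in the product of two copies of the tree of words
over `α`. -/
noncomputable def sphere (α : Type*) [Finite α] (n : ℕ) : Finset (List α × List α) :=
  (HasAntidiagonal.antidiagonal n).disjiUnion (fun ij => words α ij.1 ×ˢ words α ij.2)
    pairwiseDisjoint_words_product_words

@[simp]
lemma mem_sphere [Finite α] {n : ℕ} {p : List α × List α} :
    p ∈ sphere α n ↔ p.1.length + p.2.length = n := by
  simp [sphere]

lemma sum_sphere [Finite α] (n : ℕ) (g : List α × List α → M) :
    ∑ p ∈ sphere α n, g p =
      ∑ ij ∈ HasAntidiagonal.antidiagonal n,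
        ∑ u ∈ words α ij.1, ∑ v ∈ words α ij.2, g (u, v) := by
  simp only [sphere, Finset.sum_disjiUnion, Finset.sum_product]

end Words

section Inequalities

variable {ι : Type*}

lemma card_mul_abs_mean_sub_le [Fintype ι] (h : ι → ℝ) (b : ℝ) :
    Fintype.card ι * |(∑ y, h y) / Fintype.card ι - b| ≤ ∑ y, |h y - b| := by
  rcases isEmpty_or_nonempty ι with _ | _
  · simp
  have hcard : (0 : ℝ) < Fintype.card ι := by exact_mod_cast Fintype.card_pos
  calc Fintype.card ι * |(∑ y, h y) / Fintype.card ι - b|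
      = |Fintype.card ι * ((∑ y, h y) / Fintype.card ι - b)| := by
        rw [abs_mul, abs_of_pos hcard]
    _ = |∑ y, (h y - b)| := by
        rw [mul_sub, mul_div_cancel₀ _ hcard.ne']
        simp [Finset.sum_sub_distrib]
    _ ≤ ∑ y, |h y - b| := Finset.abs_sum_le_sum_abs _ _

lemma sum_abs_sub_mean_le [Fintype ι] (g h : ι → ℝ) (b : ℝ) :
    ∑ x, |g x - (∑ y, h y) / Fintype.card ι| ≤ ∑ y, |h y - b| + ∑ x, |g x - b| := by
  calc ∑ x, |g x - (∑ y, h y) / Fintype.card ι|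
      ≤ ∑ x, (|(∑ y, h y) / Fintype.card ι - b| + |g x - b|) :=
        Finset.sum_le_sum fun x _ => by
          rw [add_comm, abs_sub_comm (_ / _) b]
          exact abs_sub_le _ _ _
    _ = Fintype.card ι * |(∑ y, h y) / Fintype.card ι - b| + ∑ x, |g x - b| := by
        simp [Finset.sum_add_distrib]
    _ ≤ _ := by
        gcongr
        exact card_mul_abs_mean_sub_le h b

lemma abs_abs_sub_sub_abs_sub_le (x y a : ℝ) : |(|x - a| - |y - a|)| ≤ |x - y| := by
  simpa only [sub_sub_sub_cancel_right] using abs_abs_sub_abs_le (x - a) (y - a)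

lemma abs_sum_abs_sub_sum_abs_le [Fintype ι] (g h : ι → ℝ) (a b : ℝ) :
    |(∑ x, |g x - a| - ∑ x, |h x - a|)| ≤ ∑ x, |g x - b| + ∑ x, |h x - b| := by
  rw [← Finset.sum_sub_distrib, ← Finset.sum_add_distrib]
  refine (Finset.abs_sum_le_sum_abs _ _).trans (Finset.sum_le_sum fun x _ => ?_)
  calc |(|g x - a| - |h x - a|)| ≤ |g x - h x| := abs_abs_sub_sub_abs_sub_le _ _ _
    _ ≤ |g x - b| + |h x - b| := by
        rw [abs_sub_comm (h x)]
        exact abs_sub_le _ _ _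

lemma finsum_abs_le_two_mul_finsum_abs_sub [Finite ι] {f : ι → ℝ} (hf : ∑ᶠ x, f x = 0) (a : ℝ) :
    ∑ᶠ x, |f x| ≤ 2 * ∑ᶠ x, |f x - a| := by
  cases nonempty_fintype ι
  simp only [finsum_eq_sum_of_fintype] at hf ⊢
  have sum_abs_const : ∑ _x : ι, |a| ≤ ∑ x, |f x - a| := by
    calc ∑ _x : ι, |a| = |∑ x, (f x - a)| := by
          simp [Finset.sum_sub_distrib, hf, abs_mul]
      _ ≤ _ := Finset.abs_sum_le_sum_abs _ _
  calc ∑ x, |f x| ≤ ∑ x, (|f x - a| + |a|) :=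
        Finset.sum_le_sum fun x _ => by simpa using abs_add_le (f x - a) a
    _ ≤ 2 * ∑ x, |f x - a| := by
        rw [Finset.sum_add_distrib, two_mul]
        gcongr

lemma abs_sub_le_sum_antidiagonal {A e : ℕ → ℕ → ℝ}
    (h : ∀ i j, |A (i + 1) j - A i (j + 1)| ≤ e i j) {n i j i' j' : ℕ}
    (hij : i + j = n + 1) (hij' : i' + j' = n + 1) :
    |A i j - A i' j'| ≤ ∑ r ∈ HasAntidiagonal.antidiagonal n, e r.1 r.2 := by
  wlog hle : i ≤ i' generalizing i j i' j'
  · rw [abs_sub_comm]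
    exact this hij' hij (le_of_not_ge hle)
  have step : ∀ l ∈ Finset.range (n + 1),
      dist (A l (n + 1 - l)) (A (l + 1) (n + 1 - (l + 1))) ≤ e l (n - l) := by
    intro l hl
    rw [Finset.mem_range] at hl
    rw [dist_comm, Real.dist_eq, Nat.add_sub_add_right, Nat.sub_add_comm (by omega)]
    exact h l (n - l)
  rw [Finset.Nat.sum_antidiagonal_eq_sum_range_succ e, ← Real.dist_eq,
    Nat.eq_sub_of_add_eq' hij, Nat.eq_sub_of_add_eq' hij']
  calc dist (A i (n + 1 - i)) (A i' (n + 1 - i'))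
      ≤ ∑ l ∈ Finset.Ico i i', dist (A l (n + 1 - l)) (A (l + 1) (n + 1 - (l + 1))) :=
        dist_le_Ico_sum_dist (fun l => A l (n + 1 - l)) hle
    _ ≤ ∑ l ∈ Finset.range (n + 1), dist (A l (n + 1 - l)) (A (l + 1) (n + 1 - (l + 1))) := by
        refine Finset.sum_le_sum_of_subset_of_nonneg (fun l hl => ?_) fun _ _ _ => dist_nonneg
        simp only [Finset.mem_Ico, Finset.mem_range] at hl ⊢
        omega
    _ ≤ ∑ l ∈ Finset.range (n + 1), e l (n - l) := Finset.sum_le_sum step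

end Inequalities

section Blocks

variable {α : Type*}

/-- The child of `p` obtained by appending a letter to the first coordinate (`Sum.inl`) or to the
second one (`Sum.inr`). -/
def child (p : List α × List α) : α ⊕ α → List α × List α
  | .inl x => (p.1 ++ [x], p.2)
  | .inr x => (p.1, p.2 ++ [x])

variable [Fintype α] (F : List α × List α → ℝ)

/-- The total variation of `F` along the edges from `p` to its children. -/
def upGradient (p : List α × List α) : ℝ :=
  ∑ c, |F (child p c) - F p|

lemma upGradient_mk (u v : List α) :
    upGradient F (u, v) =
      ∑ x, |F (u ++ [x], v) - F (u, v)| + ∑ x, |F (u, v ++ [x]) - F (u, v)| :=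
  Fintype.sum_sum_type _

lemma upGradient_nonneg (p : List α × List α) : 0 ≤ upGradient F p :=
  Finset.sum_nonneg fun _ _ => abs_nonneg _

/-- The sum of `upGradient F` over the block of pairs of words of lengths `i` and `j`. -/
noncomputable def blockGradient (i j : ℕ) : ℝ :=
  ∑ u ∈ words α i, ∑ v ∈ words α j, upGradient F (u, v)

/-- The `L¹`-distance from `F` to the constant `a` on the block of pairs of words of lengths `i`
and `j`. -/
noncomputable def blockDeviation (a : ℝ) (i j : ℕ) : ℝ :=
  ∑ u ∈ words α i, ∑ v ∈ words α j, |F (u, v) - a|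

/-- The mean of `F (u, v)` over the words `u` of length `i`. -/
noncomputable def fiberMean (i : ℕ) (v : List α) : ℝ :=
  (∑ u ∈ words α i, F (u, v)) / Fintype.card α ^ i

/-- The analogue of `blockDeviation` with `F` replaced by its mean over the first coordinate. The
factor `Fintype.card α ^ i` is the number of words averaged over. -/
noncomputable def fiberMeanDeviation (a : ℝ) (i j : ℕ) : ℝ :=
  Fintype.card α ^ i * ∑ v ∈ words α j, |fiberMean F i v - a|

lemma abs_blockDeviation_sub_le (a : ℝ) (i j : ℕ) :
    |blockDeviation F a (i + 1) j - blockDeviation F a i (j + 1)| ≤ blockGradient F i j := by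
  have difference_eq_sum :
      blockDeviation F a (i + 1) j - blockDeviation F a i (j + 1) =
        ∑ u ∈ words α i, ∑ v ∈ words α j,
          (∑ x, |F (u ++ [x], v) - a| - ∑ x, |F (u, v ++ [x]) - a|) := by
    simp only [blockDeviation, sum_words_succ, Finset.sum_sub_distrib]
    congr 1
    exact Finset.sum_congr rfl fun u _ => Finset.sum_comm
  rw [difference_eq_sum, blockGradient]
  refine (Finset.abs_sum_le_sum_abs _ _).trans (Finset.sum_le_sum fun u _ => ?_)
  refine (Finset.abs_sum_le_sum_abs _ _).trans (Finset.sum_le_sum fun v _ => ?_)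
  rw [upGradient_mk]
  exact abs_sum_abs_sub_sum_abs_le _ _ _ _

lemma blockDeviation_le_add [Nonempty α] (a : ℝ) (i j : ℕ) :
    blockDeviation F a i j ≤ blockDeviation F a i (j + 1) + blockGradient F i j := by
  simp only [blockDeviation, blockGradient, sum_words_succ, ← Finset.sum_add_distrib]
  refine Finset.sum_le_sum fun u _ => Finset.sum_le_sum fun v _ => ?_
  obtain ⟨x⟩ := ‹Nonempty α›
  calc |F (u, v) - a| ≤ |F (u, v ++ [x]) - a| + |F (u, v ++ [x]) - F (u, v)| := by
        rw [add_comm, abs_sub_comm (F (u, v ++ [x])) (F (u, v))]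
        exact abs_sub_le _ _ _
    _ ≤ ∑ y, |F (u, v ++ [y]) - a| + upGradient F (u, v) :=
        add_le_add
          (Finset.single_le_sum (f := fun y => |F (u, v ++ [y]) - a|)
            (fun _ _ => abs_nonneg _) (Finset.mem_univ x))
          (Finset.single_le_sum (f := fun c => |F (child (u, v) c) - F (u, v)|)
            (fun _ _ => abs_nonneg _) (Finset.mem_univ (Sum.inr x)))

lemma pow_card_mul_sum_abs_fiberMean_sub_le [Nonempty α] (i : ℕ) (v : List α) :
    Fintype.card α ^ i * ∑ x, |fiberMean F i (v ++ [x]) - fiberMean F (i + 1) v| ≤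
      ∑ u ∈ words α i, upGradient F (u, v) := by
  have hcard : (0 : ℝ) < Fintype.card α := by exact_mod_cast Fintype.card_pos
  have difference_eq_sum (x : α) :
      Fintype.card α ^ i * |fiberMean F i (v ++ [x]) - fiberMean F (i + 1) v| =
        |∑ u ∈ words α i, (F (u, v ++ [x]) - (∑ y, F (u ++ [y], v)) / Fintype.card α)| := by
    nth_rw 1 [← abs_of_pos (pow_pos hcard i), ← abs_mul]
    rw [Finset.sum_sub_distrib, ← Finset.sum_div, fiberMean, fiberMean, sum_words_succ, mul_sub,
      mul_div_cancel₀ _ (pow_pos hcard i).ne', pow_succ', ← div_div,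
      mul_div_cancel₀ _ (pow_pos hcard i).ne']
  simp only [Finset.mul_sum, difference_eq_sum]
  calc ∑ x, |∑ u ∈ words α i, (F (u, v ++ [x]) - (∑ y, F (u ++ [y], v)) / Fintype.card α)|
      ≤ ∑ x, ∑ u ∈ words α i, |F (u, v ++ [x]) - (∑ y, F (u ++ [y], v)) / Fintype.card α| :=
        Finset.sum_le_sum fun _ _ => Finset.abs_sum_le_sum_abs _ _
    _ = ∑ u ∈ words α i, ∑ x, |F (u, v ++ [x]) - (∑ y, F (u ++ [y], v)) / Fintype.card α| :=
        Finset.sum_comm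
    _ ≤ ∑ u ∈ words α i, upGradient F (u, v) :=
        Finset.sum_le_sum fun u _ => by
          rw [upGradient_mk]
          exact sum_abs_sub_mean_le _ _ _

lemma abs_fiberMeanDeviation_sub_le [Nonempty α] (a : ℝ) (i j : ℕ) :
    |fiberMeanDeviation F a (i + 1) j - fiberMeanDeviation F a i (j + 1)| ≤
      blockGradient F i j := by
  have difference_eq_sum :
      fiberMeanDeviation F a (i + 1) j - fiberMeanDeviation F a i (j + 1) =
        ∑ v ∈ words α j, ∑ x, Fintype.card α ^ i *
          (|fiberMean F (i + 1) v - a| - |fiberMean F i (v ++ [x]) - a|) := by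
    simp only [fiberMeanDeviation, sum_words_succ, Finset.mul_sum, mul_sub,
      Finset.sum_sub_distrib, Finset.sum_const, Finset.card_univ, nsmul_eq_mul, pow_succ',
      mul_assoc]
  rw [difference_eq_sum, blockGradient, Finset.sum_comm (s := words α i)]
  refine (Finset.abs_sum_le_sum_abs _ _).trans (Finset.sum_le_sum fun v _ => ?_)
  refine le_trans ?_ (pow_card_mul_sum_abs_fiberMean_sub_le F i v)
  rw [Finset.mul_sum]
  refine (Finset.abs_sum_le_sum_abs _ _).trans (Finset.sum_le_sum fun x _ => ?_)
  rw [abs_mul, abs_of_nonneg (by positivity),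
    abs_sub_comm (fiberMean F i (v ++ [x])) (fiberMean F (i + 1) v)]
  refine mul_le_mul_of_nonneg_left ?_ (by positivity)
  exact abs_abs_sub_sub_abs_sub_le _ _ _

lemma fiberMeanDeviation_zero_left (a : ℝ) (j : ℕ) :
    fiberMeanDeviation F a 0 j = blockDeviation F a 0 j := by
  simp [fiberMeanDeviation, blockDeviation, fiberMean, words_zero]

lemma fiberMeanDeviation_fiberMean_zero_right (i : ℕ) :
    fiberMeanDeviation F (fiberMean F i []) i 0 = 0 := by
  simp [fiberMeanDeviation, words_zero]

lemma blockDeviation_fiberMean_le [Nonempty α] {n i j : ℕ} (hij : i + j = n + 1) :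
    blockDeviation F (fiberMean F (n + 1) []) i j ≤ 2 * ∑ p ∈ sphere α n, upGradient F p := by
  set a := fiberMean F (n + 1) []
  have from_means :
      |fiberMeanDeviation F a 0 (n + 1) - fiberMeanDeviation F a (n + 1) 0| ≤
        ∑ p ∈ sphere α n, upGradient F p := by
    rw [sum_sphere]
    exact abs_sub_le_sum_antidiagonal (abs_fiberMeanDeviation_sub_le F a)
      (zero_add _) (add_zero _)
  have from_first_block :
      |blockDeviation F a i j - blockDeviation F a 0 (n + 1)| ≤
        ∑ p ∈ sphere α n, upGradient F p := by
    rw [sum_sphere]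
    exact abs_sub_le_sum_antidiagonal (abs_blockDeviation_sub_le F a) hij (zero_add _)
  rw [fiberMeanDeviation_fiberMean_zero_right, fiberMeanDeviation_zero_left] at from_means
  linarith [le_of_abs_le from_means, le_of_abs_le from_first_block]

lemma sum_sphere_abs_sub_fiberMean_le [Nonempty α] (n : ℕ) :
    ∑ p ∈ sphere α (n + 1), |F p - fiberMean F (n + 1) []| ≤
      2 * (n + 2) * ∑ p ∈ sphere α n, upGradient F p := by
  rw [sum_sphere]
  refine (Finset.sum_le_card_nsmul _ _ _ fun _ hij =>
    blockDeviation_fiberMean_le F (HasAntidiagonal.mem_antidiagonal.1 hij)).trans_eq ?_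
  rw [Finset.Nat.card_antidiagonal, nsmul_eq_mul]
  push_cast
  ring

lemma sum_sphere_abs_sub_le_sum_sphere_succ [Nonempty α] (a : ℝ) (n : ℕ) :
    ∑ p ∈ sphere α n, |F p - a| ≤
      ∑ p ∈ sphere α (n + 1), |F p - a| + ∑ p ∈ sphere α n, upGradient F p := by
  have sum_antidiagonal_succ_le :
      ∑ ij ∈ HasAntidiagonal.antidiagonal n, blockDeviation F a ij.1 (ij.2 + 1) ≤
        ∑ p ∈ sphere α (n + 1), |F p - a| := by
    rw [sum_sphere, Finset.Nat.sum_antidiagonal_succ']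
    exact le_add_of_nonneg_left (by positivity)
  calc ∑ p ∈ sphere α n, |F p - a|
      ≤ ∑ ij ∈ HasAntidiagonal.antidiagonal n,
          (blockDeviation F a ij.1 (ij.2 + 1) + blockGradient F ij.1 ij.2) := by
        rw [sum_sphere]
        exact Finset.sum_le_sum fun ij _ => blockDeviation_le_add F a ij.1 ij.2
    _ = ∑ ij ∈ HasAntidiagonal.antidiagonal n, blockDeviation F a ij.1 (ij.2 + 1) +
          ∑ p ∈ sphere α n, upGradient F p := by
        rw [Finset.sum_add_distrib, sum_sphere]
        rfl
    _ ≤ _ := by gcongr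

end Blocks

section Graph

/-- The annulus of radii `k - 1` and `k` around the root in the product of two copies of the tree
of words over `α`. It is definitionally `AnnV k` when `α` is `Bool`. -/
abbrev Annulus (α : Type*) (k : ℕ) : Type _ :=
  {p : List α × List α // k - 1 ≤ p.1.length + p.2.length ∧ p.1.length + p.2.length ≤ k}

variable {α : Type*}

instance [Finite α] (k : ℕ) : Finite (Annulus α k) := by
  have words_finite := List.finite_length_le α k
  have annulus_finite : {p : List α × List α |
      k - 1 ≤ p.1.length + p.2.length ∧ p.1.length + p.2.length ≤ k}.Finite :=
    (words_finite.prod words_finite).subset fun p hp =>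
      ⟨le_of_add_le_left hp.2, le_of_add_le_right hp.2⟩
  exact annulus_finite.to_subtype

/-- The pair `q` is obtained from `p` by appending one letter to one of the two words; the analogue
of `AnnRel` over an arbitrary alphabet. -/
def IsChild (p q : List α × List α) : Prop :=
  (p.2 = q.2 ∧ ∃ x : α, q.1 = p.1 ++ [x]) ∨ (p.1 = q.1 ∧ ∃ x : α, q.2 = p.2 ++ [x])

/-- The graph induced on `Annulus α k` by the product of two trees; the analogue of `annGraph`
over an arbitrary alphabet. -/
def annulusGraph (α : Type*) (k : ℕ) : SimpleGraph (Annulus α k) :=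
  SimpleGraph.fromRel fun p q => IsChild p.1 q.1

/-- The variation `|f a - f b|` of `f` along an unordered pair `s(a, b)`; the analogue of `edgeVal`
over an arbitrary vertex type. -/
noncomputable def edgeVariation {V : Type*} (f : V → ℝ) : Sym2 V → ℝ :=
  Sym2.lift ⟨fun a b => |f a - f b|, fun a b => abs_sub_comm (f a) (f b)⟩

lemma edgeVariation_comp {V W : Type*} (g : V → W) (f : W → ℝ) (e : Sym2 V) :
    edgeVariation (f ∘ g) e = edgeVariation f (e.map g) := by
  induction e using Sym2.ind with
  | _ a b => rfl

lemma isChild_iff {p q : List α × List α} : IsChild p q ↔ ∃ c, child p c = q := by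
  simp [IsChild, child, Prod.ext_iff, eq_comm, and_comm]

lemma length_child (p : List α × List α) (c : α ⊕ α) :
    (child p c).1.length + (child p c).2.length = p.1.length + p.2.length + 1 := by
  cases c <;> simp only [child, List.length_append, List.length_singleton] <;> omega

lemma child_injective (p : List α × List α) : Function.Injective (child p) := by
  rintro (x | x) (y | y) h <;> simp_all [child]

/-- The edge joining a vertex to one of its children. -/
def childEdge (pc : (List α × List α) × (α ⊕ α)) : Sym2 (List α × List α) :=
  s(child pc.1 pc.2, pc.1)

lemma childEdge_injective : Function.Injective (childEdge (α := α)) := by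
  rintro ⟨p, c⟩ ⟨q, d⟩ h
  obtain ⟨hchild, rfl : p = q⟩ | ⟨hp : child p c = q, hq : p = child q d⟩ := Sym2.eq_iff.1 h
  · exact congrArg (Prod.mk p) (child_injective p hchild)
  · have hc := length_child p c
    have hd := length_child q d
    rw [← hq] at hd
    simp only [hp] at hc
    omega

lemma mk_mem_image_childEdge_of_isChild [Finite α] {n : ℕ} {a b : Annulus α (n + 1)}
    (h : IsChild a.1 b.1) :
    s(b.1, a.1) ∈ childEdge '' ((sphere α n : Set (List α × List α)) ×ˢ univ) := by
  obtain ⟨c, hc⟩ := isChild_iff.1 h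
  have hlen := length_child a.1 c
  rw [hc] at hlen
  have ha : a.1.1.length + a.1.2.length = n :=
    le_antisymm (Nat.le_of_succ_le_succ (hlen.ge.trans b.2.2)) a.2.1
  exact ⟨(a.1, c), ⟨mem_sphere.2 ha, mem_univ _⟩, by rw [childEdge, hc]⟩

lemma image_edgeSet_annulusGraph [Finite α] (n : ℕ) :
    Sym2.map Subtype.val '' (annulusGraph α (n + 1)).edgeSet =
      childEdge '' ((sphere α n : Set (List α × List α)) ×ˢ univ) := by
  apply Subset.antisymm
  · rintro _ ⟨e, he, rfl⟩
    induction e using Sym2.ind with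
    | _ a b =>
      rw [SimpleGraph.mem_edgeSet, annulusGraph, SimpleGraph.fromRel_adj] at he
      obtain ⟨-, h | h⟩ := he
      · rw [Sym2.map_mk, Sym2.eq_swap]
        exact mk_mem_image_childEdge_of_isChild h
      · exact mk_mem_image_childEdge_of_isChild h
  · rintro _ ⟨⟨p, c⟩, ⟨hp, -⟩, rfl⟩
    have hp : p.1.length + p.2.length = n := mem_sphere.1 hp
    have hlen := length_child p c
    let a : Annulus α (n + 1) := ⟨p, by omega⟩
    let b : Annulus α (n + 1) := ⟨child p c, by omega⟩
    refine ⟨s(b, a), ?_, rfl⟩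
    rw [SimpleGraph.mem_edgeSet, annulusGraph, SimpleGraph.fromRel_adj]
    refine ⟨fun hba => ?_, Or.inr (isChild_iff.2 ⟨c, rfl⟩)⟩
    have : child p c = p := congrArg Subtype.val hba
    rw [this] at hlen
    omega

lemma finsum_edgeVariation_annulusGraph [Fintype α] (n : ℕ) (F : List α × List α → ℝ) :
    ∑ᶠ e ∈ (annulusGraph α (n + 1)).edgeSet, edgeVariation (F ∘ Subtype.val) e =
      ∑ p ∈ sphere α n, upGradient F p := by
  simp only [edgeVariation_comp]
  rw [← finsum_mem_image (Sym2.map.injective Subtype.val_injective).injOn,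
    image_edgeSet_annulusGraph, finsum_mem_image childEdge_injective.injOn, ← Finset.coe_univ,
    ← Finset.coe_product, finsum_mem_coe_finset, Finset.sum_product]
  rfl

lemma finsum_annulus [Finite α] {M : Type*} [AddCommMonoid M] (n : ℕ)
    (g : List α × List α → M) :
    ∑ᶠ v : Annulus α (n + 1), g v.1 = ∑ p ∈ sphere α n, g p + ∑ p ∈ sphere α (n + 1), g p := by
  have disjoint : Disjoint (sphere α n) (sphere α (n + 1)) := by
    refine Finset.disjoint_left.2 fun p hp hq => ?_
    rw [mem_sphere] at hp hq
    omega
  rw [← Finset.sum_disjUnion disjoint, ← finsum_mem_coe_finset, finsum_subtype_eq_finsum_cond]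
  refine finsum_mem_congr (Set.ext fun p => ?_) fun _ _ => rfl
  rw [Finset.mem_coe, Finset.mem_disjUnion, mem_sphere, mem_sphere]
  change n + 1 - 1 ≤ _ ∧ _ ↔ _
  omega

end Graph

end TreeProduct

open TreeProduct in
theorem annulus_poincare_inequality_general {α : Type*} [Finite α] [Nonempty α] {k : ℕ}
    (hk : 1 ≤ k) (f : Annulus α k → ℝ) (hf : ∑ᶠ v, f v = 0) :
    1 / 8 / ((k : ℝ) + 2) * ∑ᶠ v, |f v| ≤
      ∑ᶠ e ∈ (annulusGraph α k).edgeSet, edgeVariation f e := by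
  cases nonempty_fintype α
  obtain ⟨n, rfl⟩ := Nat.exists_eq_add_of_le' hk
  obtain ⟨F, rfl⟩ : ∃ F : List α × List α → ℝ, F ∘ Subtype.val = f :=
    ⟨_, Function.extend_comp Subtype.val_injective f 0⟩
  have abs_le_deviation := finsum_abs_le_two_mul_finsum_abs_sub hf (fiberMean F (n + 1) [])
  simp only [Function.comp_apply] at abs_le_deviation ⊢
  rw [finsum_annulus n fun p => |F p - fiberMean F (n + 1) []|] at abs_le_deviation
  have upper_sphere := sum_sphere_abs_sub_fiberMean_le F n
  have lower_sphere := sum_sphere_abs_sub_le_sum_sphere_succ F (fiberMean F (n + 1) []) n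
  have energy_nonneg : 0 ≤ ∑ p ∈ sphere α n, upGradient F p :=
    Finset.sum_nonneg fun p _ => upGradient_nonneg F p
  rw [finsum_edgeVariation_annulusGraph, div_mul_eq_mul_div, div_le_iff₀ (by positivity)]
  push_cast
  -- `2 * (2 * (2 * (n + 2)) + 1) ≤ 8 * (n + 3)` is the source of the constant `1 / 8`.
  linarith

/-- `L¹`-Poincaré inequality for the annuli `A_k`: there is a universal `c > 0` such that
for every `k ≥ 1` and every zero-mean `f : V(A_k) → ℝ`,
`Σ_{{a,b} ∈ E(A_k)} |f(a) − f(b)| ≥ (c/(k+2))·Σ_v |f(v)|`. -/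
theorem annulus_poincare_inequality :
    ∃ c > (0 : ℝ), ∀ k : ℕ, 1 ≤ k → ∀ f : AnnV k → ℝ, (∑ᶠ v : AnnV k, f v) = 0 →
      (c / ((k : ℝ) + 2)) * (∑ᶠ v : AnnV k, |f v|) ≤
        ∑ᶠ e ∈ (annGraph k).edgeSet, edgeVal f e :=
  ⟨1 / 8, by norm_num, fun _ hk f hf =>
    annulus_poincare_inequality_general (α := Bool) hk f hf⟩
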